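/- arXiv:1302.6298 — 3 statements merged into one kernel-verified Lean document; each statement's English description precedes it below -/
import Mathlib

section
/- Let k, a⁺, a⁻ be the K-linear operators on the Fock space F defined by k|m⟩ = q^m|m⟩, a⁺|m⟩ = |m+1⟩, a⁻|m⟩ = (1 − q^{2m})|m−1⟩ (with a⁻|0⟩ = 0), and let α, μ ∈ K be nonzero. Set t₁₁ = μ a⁻, t₁₂ = α k, t₂₁ = −q α⁻¹ k, t₂₂ = μ⁻¹ a⁺. Then these operators satisfy the defining relations of the quantized algebra of functions A_q(A₁): t₁₁t₂₁ = q t₂₁t₁₁, t₁₂t₂₂ = q t₂₂t₁₂, t₁₁t₁₂ = q t₁₂t₁₁, t₂₁t₂₂ = q t₂₂t₂₁, t₁₂t₂₁ = t₂₁t₁₂, t₁₁t₂₂ − t₂₂t₁₁ = (q − q⁻¹) t₂₁t₁₂, and t₁₁t₂₂ − q t₁₂t₂₁ = 1. -/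
noncomputable section

/-- The base field `K = ℚ(q)`, rational functions over `ℚ`. -/
abbrev K : Type := RatFunc ℚ

/-- The indeterminate `q`. -/
def q : K := RatFunc.X

/-- The Fock space `F` with basis `|m⟩, m ∈ ℕ`. -/
abbrev F : Type := ℕ →₀ K

/-- The basis vector `|m⟩`. -/
def ket (m : ℕ) : F := Finsupp.single m 1

/-- The operator `k : |m⟩ ↦ q^m |m⟩`. -/
def opK : Module.End K F := Finsupp.lift F K ℕ fun m => (q ^ m) • ket m

/-- The operator `a⁺ : |m⟩ ↦ |m+1⟩`. -/
def opAp : Module.End K F := Finsupp.lift F K ℕ fun m => ket (m + 1)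

/-- The operator `a⁻ : |m⟩ ↦ (1 - q^{2m}) |m-1⟩` (so `a⁻|0⟩ = 0`). -/
def opAm : Module.End K F := Finsupp.lift F K ℕ fun m => (1 - q ^ (2 * m)) • ket (m - 1)

theorem opK_ket (m : ℕ) : opK (ket m) = (q ^ m) • ket m := by
  unfold opK ket
  rw [Finsupp.lift_apply, Finsupp.sum_single_index, one_smul]
  rw [zero_smul]

theorem opAp_ket (m : ℕ) : opAp (ket m) = ket (m + 1) := by
  simp [opAp, ket]

theorem opAm_ket (m : ℕ) : opAm (ket m) = (1 - q ^ (2 * m)) • ket (m - 1) := by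
  simp [opAm, ket]

theorem end_ext_ket {f g : Module.End K F} (h : ∀ m, f (ket m) = g (ket m)) : f = g :=
  Finsupp.lhom_ext' fun m => LinearMap.ext_ring (h m)

theorem q_ne_zero : q ≠ 0 := RatFunc.X_ne_zero

/-- the fundamental representation of `A_q(A₁)` on the Fock space. -/
theorem statement1 (α μ : K) (hα : α ≠ 0) (hμ : μ ≠ 0)
    (t11 t12 t21 t22 : Module.End K F)
    (h11 : t11 = μ • opAm) (h12 : t12 = α • opK)
    (h21 : t21 = (-(q * α⁻¹)) • opK) (h22 : t22 = μ⁻¹ • opAp) :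
    t11 * t21 = q • (t21 * t11) ∧
    t12 * t22 = q • (t22 * t12) ∧
    t11 * t12 = q • (t12 * t11) ∧
    t21 * t22 = q • (t22 * t21) ∧
    t12 * t21 = t21 * t12 ∧
    t11 * t22 - t22 * t11 = (q - q⁻¹) • (t21 * t12) ∧
    t11 * t22 - q • (t12 * t21) = 1 := by
  have hq := q_ne_zero
  subst h11 h12 h21 h22
  refine ⟨?_, ?_, ?_, ?_, ?_, ?_, ?_⟩ <;> refine end_ext_ket fun m => ?_ <;> rcases m with _ | m <;>
    simp only [Module.End.mul_apply, LinearMap.smul_apply, LinearMap.sub_apply, map_smul, map_zero,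
      opK_ket, opAp_ket, opAm_ket, smul_smul, Module.End.one_apply, Nat.add_sub_cancel, Nat.sub_self,
      Nat.zero_add, pow_zero, sub_self, mul_zero, zero_smul, smul_zero, sub_zero,
      ← sub_smul] <;>
    first
    | done
    | (refine congrArg (· • ket _) ?_; field_simp; try ring)
    | (refine (congrArg (· • ket _) ?_).trans (one_smul K _); field_simp; try ring)
end
end

section
/- Let k, a⁺, a⁻ be the K-linear operators on the Fock space F defined by k|m⟩ = q^m|m⟩, a⁺|m⟩ = |m+1⟩, a⁻|m⟩ = (1 − q^{2m})|m−1⟩ (with a⁻|0⟩ = 0). Then F is irreducible under these operators: every nonzero K-subspace W of F satisfying k(W) ⊆ W, a⁺(W) ⊆ W and a⁻(W) ⊆ W equals F. -/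
noncomputable section

theorem one_sub_q_pow_ne (m : ℕ) : (1 - q ^ (2 * (m + 1)) : K) ≠ 0 := by
  intro h
  have h1 : (q ^ (2 * (m + 1)) : K) = 1 := (sub_eq_zero.mp h).symm
  have h2 : algebraMap (Polynomial ℚ) (RatFunc ℚ) (Polynomial.X ^ (2 * (m + 1)))
      = algebraMap (Polynomial ℚ) (RatFunc ℚ) 1 := by
    rw [map_pow, RatFunc.algebraMap_X, map_one]
    exact h1
  have h3 := RatFunc.algebraMap_injective ℚ h2
  have h4 := congrArg Polynomial.natDegree h3
  simp at h4

theorem opAm_apply (x : F) (m : ℕ) : opAm x m = (1 - q ^ (2 * (m + 1))) * x (m + 1) := by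
  induction x using Finsupp.induction_linear with
  | zero => simp
  | add f g hf hg => rw [map_add, Finsupp.add_apply, hf, hg, Finsupp.add_apply]; ring
  | single n c =>
    rcases n with _ | n
    · simp [opAm, ket]
    · by_cases h : n = m
      · subst h
        simp [opAm, ket, mul_comm]
      · simp [opAm, ket, Finsupp.single_apply, h]

theorem ket_zero_mem (W : Submodule K F) (hm : ∀ x ∈ W, opAm x ∈ W) (N : ℕ) :
    ∀ x ∈ W, x ≠ 0 → (∀ m, N ≤ m → x m = 0) → ket 0 ∈ W := by
  induction N with
  | zero =>
    intro x _ hx h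
    exact absurd (Finsupp.ext fun m => h m (Nat.zero_le m)) hx
  | succ N ih =>
    intro x hxW hx h
    by_cases h0 : opAm x = 0
    · have hs : ∀ m, x (m + 1) = 0 := by
        intro m
        have h1 := opAm_apply x m
        rw [h0, Finsupp.zero_apply] at h1
        exact (mul_eq_zero.mp h1.symm).resolve_left (one_sub_q_pow_ne m)
      have hx0 : x 0 ≠ 0 := by
        intro h00
        apply hx
        ext m
        rcases m with _ | m
        · exact h00
        · exact hs m
      have hk : ket 0 = (x 0)⁻¹ • x := by
        ext m
        rcases m with _ | m
        · simp [ket, hx0]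
        · simp [ket, hs m]
      rw [hk]
      exact W.smul_mem _ hxW
    · refine ih (opAm x) (hm x hxW) h0 fun m hNm => ?_
      rw [opAm_apply, h (m + 1) (by omega), mul_zero]

/-- the Fock space is irreducible under `k, a⁺, a⁻`. -/
theorem statement2 (W : Submodule K F) (hW : W ≠ ⊥)
    (hk : ∀ x ∈ W, opK x ∈ W) (hp : ∀ x ∈ W, opAp x ∈ W) (hm : ∀ x ∈ W, opAm x ∈ W) :
    W = ⊤ := by
  obtain ⟨x, hxW, hx⟩ := W.ne_bot_iff.mp hW
  have h0 : ket 0 ∈ W := by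
    refine ket_zero_mem W hm (x.support.sup id + 1) x hxW hx fun m hN => ?_
    by_contra hne
    have : m ≤ x.support.sup id :=
      Finset.le_sup (f := id) (Finsupp.mem_support_iff.mpr hne)
    omega
  have hall : ∀ m, ket m ∈ W := by
    intro m
    induction m with
    | zero => exact h0
    | succ m ih =>
      rw [← opAp_ket]
      exact hp _ ih
  rw [eq_top_iff]
  intro y _
  induction y using Finsupp.induction_linear with
  | zero => exact W.zero_mem
  | add f g hf hg => exact W.add_mem (hf trivial) (hg trivial)
  | single n c =>
    have : (Finsupp.single n c : F) = c • ket n := by simp [ket]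
    rw [this]
    exact W.smul_mem _ (hall n)
end
end

section
/- In U = U_q⁺(A₂), set b₂' = e₂e₁ − q e₁e₂ and write E(a,b,c) = e₁^a (b₂')^b e₂^c for a,b,c ∈ ℕ, with the convention that any term having a negative index is read as 0 (its scalar coefficient then vanishes). Then: e₁·E(a,b,c) = E(a+1,b,c) and e₂·E(a,b,c) = q^{a−b} E(a,b,c+1) + [a]₁ E(a−1,b+1,c). -/
noncomputable section

/-- The `q`-integer `[m]₁ = (q^m - q^{-m})/(q - q⁻¹)`. -/
def qint (n : ℕ) : K := (q ^ n - q⁻¹ ^ n) / (q - q⁻¹)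

/-- Generators of the free algebra on two letters. -/
def g (i : Fin 2) : FreeAlgebra K (Fin 2) := FreeAlgebra.ι K i

/-- The `q`-Serre relations of type `A₂`. -/
inductive SerreA2 : FreeAlgebra K (Fin 2) → FreeAlgebra K (Fin 2) → Prop
  | rel1 : SerreA2
      (g 0 * g 0 * g 1 - (q + q⁻¹) • (g 0 * g 1 * g 0) + g 1 * g 0 * g 0) 0
  | rel2 : SerreA2
      (g 1 * g 1 * g 0 - (q + q⁻¹) • (g 1 * g 0 * g 1) + g 0 * g 1 * g 1) 0

/-- `U_q⁺(A₂)`: the free algebra on `e₁, e₂` modulo the `q`-Serre relations. -/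
abbrev UA2 : Type := RingQuot SerreA2

/-- The Chevalley generator `e₁`. -/
def e1 : UA2 := RingQuot.mkAlgHom K SerreA2 (g 0)

/-- The Chevalley generator `e₂`. -/
def e2 : UA2 := RingQuot.mkAlgHom K SerreA2 (g 1)

/-- The root vector `b₁ = e₂`. -/
def b1 : UA2 := e2

/-- The root vector `b₂ = e₁e₂ − q e₂e₁`. -/
def b2 : UA2 := e1 * e2 - q • (e2 * e1)

/-- The root vector `b₃ = e₁`. -/
def b3 : UA2 := e1

/-- The twisted root vector `b₂' = e₂e₁ − q e₁e₂`. -/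
def b2' : UA2 := e2 * e1 - q • (e1 * e2)

/-- The PBW monomial `E(a,b,c) = e₁^a (b₂')^b e₂^c`. -/
def Emon (a b c : ℕ) : UA2 := e1 ^ a * b2' ^ b * e2 ^ c

theorem q_sub_inv_ne_zero : q - q⁻¹ ≠ 0 := by
  intro h
  have h0 := q_ne_zero
  have h1 : q * q = 1 := by
    field_simp at h
    linear_combination h
  have h2 : (Polynomial.X * Polynomial.X : Polynomial ℚ) = 1 := by
    apply RatFunc.algebraMap_injective ℚ
    simpa [q, RatFunc.algebraMap_X] using h1
  have h3 := congrArg (Polynomial.eval 0) h2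
  simp at h3

theorem qint_zero : qint 0 = 0 := by simp [qint]

theorem qint_succ (n : ℕ) : qint (n + 1) = q ^ n + q⁻¹ * qint n := by
  have h0 := q_ne_zero
  have h := q_sub_inv_ne_zero
  have h1 : (q - q⁻¹) * ((q - q⁻¹)⁻¹) = 1 := mul_inv_cancel₀ h
  have h2 : q * q⁻¹ = 1 := mul_inv_cancel₀ h0
  unfold qint
  rw [div_eq_iff h, add_mul, mul_assoc, div_mul_cancel₀ _ h]
  ring

section
variable {A : Type*} [Ring A] [Algebra K A]

theorem gen_pow_right {y b : A} (h : y * b = q⁻¹ • (b * y)) (n : ℕ) :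
    y * b ^ n = (q⁻¹ ^ n) • (b ^ n * y) := by
  induction n with
  | zero => simp
  | succ n ih =>
    rw [pow_succ, ← mul_assoc, ih, smul_mul_assoc, mul_assoc, h, mul_smul_comm, smul_smul,
      ← pow_succ, mul_assoc]

theorem gen_e2 {x y b : A} (hyx : y * x = q • (x * y) + b)
    (h : b * x = q⁻¹ • (x * b)) (n : ℕ) :
    y * x ^ n = (q ^ n) • (x ^ n * y) + qint n • (x ^ (n - 1) * b) := by
  induction n with
  | zero => simp [qint_zero]
  | succ n ih =>
    have key : qint n • (x ^ (n - 1) * b * x) = (q⁻¹ * qint n) • (x ^ n * b) := by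
      cases n with
      | zero => simp [qint_zero]
      | succ m =>
        rw [mul_assoc, h, mul_smul_comm, smul_smul, mul_comm, Nat.add_sub_cancel, pow_succ x m,
          mul_assoc (x ^ m)]
    rw [pow_succ x n, ← mul_assoc, ih, add_mul, smul_mul_assoc, smul_mul_assoc, key, mul_assoc,
      hyx, mul_add, mul_smul_comm, smul_add, smul_smul, ← pow_succ, qint_succ, add_smul,
      Nat.add_sub_cancel, mul_assoc, add_assoc]

theorem gen_b_x {x y : A}
    (r : x * x * y - (q + q⁻¹) • (x * y * x) + y * x * x = 0) :
    (y * x - q • (x * y)) * x = q⁻¹ • (x * (y * x - q • (x * y))) := by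
  have h2 : q⁻¹ * q = 1 := inv_mul_cancel₀ q_ne_zero
  rw [← sub_eq_zero, ← r]
  simp only [sub_mul, mul_sub, smul_sub, smul_mul_assoc, mul_smul_comm, smul_smul, h2, one_smul,
    add_smul, ← mul_assoc]
  abel

theorem gen_y_b {x y : A}
    (r : y * y * x - (q + q⁻¹) • (y * x * y) + x * y * y = 0) :
    y * (y * x - q • (x * y)) = q⁻¹ • ((y * x - q • (x * y)) * y) := by
  have h2 : q⁻¹ * q = 1 := inv_mul_cancel₀ q_ne_zero
  rw [← sub_eq_zero, ← r]
  simp only [sub_mul, mul_sub, smul_sub, smul_mul_assoc, mul_smul_comm, smul_smul, h2, one_smul,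
    add_smul, ← mul_assoc]
  abel

theorem gen_main {x y b : A} (hyx : y * x = q • (x * y) + b)
    (h : b * x = q⁻¹ • (x * b)) (h' : y * b = q⁻¹ • (b * y)) (k m n : ℕ) :
    y * (x ^ k * b ^ m * y ^ n) = (q ^ ((k : ℤ) - m)) • (x ^ k * b ^ m * y ^ (n + 1))
      + qint k • (x ^ (k - 1) * b ^ (m + 1) * y ^ n) := by
  have e : q ^ ((k : ℤ) - m) = q ^ k * q⁻¹ ^ m := by
    rw [zpow_sub₀ q_ne_zero, zpow_natCast, zpow_natCast, inv_pow, div_eq_mul_inv]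
  rw [← mul_assoc, ← mul_assoc, gen_e2 hyx h, add_mul, add_mul, smul_mul_assoc, mul_assoc (x ^ k),
    gen_pow_right h', e, mul_smul_comm, smul_smul, smul_mul_assoc, smul_mul_assoc, smul_mul_assoc,
    pow_succ' y, pow_succ' b]
  simp only [mul_assoc]
end

theorem serre1 : e1 * e1 * e2 - (q + q⁻¹) • (e1 * e2 * e1) + e2 * e1 * e1 = 0 := by
  have := RingQuot.mkAlgHom_rel K SerreA2.rel1
  simp only [map_add, map_sub, map_smul, map_mul, map_zero] at this
  exact this

theorem serre2 : e2 * e2 * e1 - (q + q⁻¹) • (e2 * e1 * e2) + e1 * e2 * e2 = 0 := by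
  have := RingQuot.mkAlgHom_rel K SerreA2.rel2
  simp only [map_add, map_sub, map_smul, map_mul, map_zero] at this
  exact this

/-- left multiplication on the PBW basis `E(a,b,c)` of `U_q⁺(A₂)`.
(Terms with a negative index appear with vanishing coefficient, so truncated
subtraction on `ℕ` realizes the stated convention.) -/
theorem statement7 (a b c : ℕ) :
    e1 * Emon a b c = Emon (a + 1) b c ∧
    e2 * Emon a b c
      = (q ^ ((a : ℤ) - b)) • Emon a b (c + 1) + qint a • Emon (a - 1) (b + 1) c := by
  constructor
  · simp only [Emon, pow_succ' e1, mul_assoc]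
  · exact gen_main (x := e1) (y := e2) (b := b2') (by simp [b2']) (gen_b_x serre1)
      (gen_y_b serre2) a b c
end
end
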